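/- Suppose that for every α in an index set A with 1 ≤ |A| ≤ ω, F(α) is a π-tree on a topological space X_α, and for each α ∈ A there is a family γ_α of subsets of ω such that |γ_α| ≤ ω, γ_α has the finite intersection property, and γ_α ≫ Rise_{F(α)}(X_α). Then the product space ∏_{α∈A} X_α has a π-tree. -/

import Mathlib

open Set

universe u v

/-- A family `γ` π-refines `δ`: every nonempty member of `δ` contains a
nonempty member of `γ`. -/
def PiRefines {α : Type*} (γ δ : Set (Set α)) : Prop :=
  ∀ D ∈ δ, D.Nonempty → ∃ G ∈ γ, G.Nonempty ∧ G ⊆ D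

/-- The finite intersection property. -/
def HasFIP {α : Type*} (γ : Set (Set α)) : Prop :=
  ∀ δ : Set (Set α), δ ⊆ γ → δ.Finite → δ.Nonempty → (⋂₀ δ).Nonempty

/-- `cofin A` is the family of complements in `A` of finite subsets of `A`. -/
def cofin (A : Set ℕ) : Set (Set ℕ) :=
  {B | ∃ C : Set ℕ, C.Finite ∧ C ⊆ A ∧ B = A \ C}

/-- A foliage tree on `X`: a set-theoretic tree (strict partial order with
well-ordered sets of strict predecessors) with a leaf (a subset of `X`)
attached to each node. -/
structure FoliageTree (X : Type u) where
  Node : Type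
  lt : Node → Node → Prop
  lt_irrefl : ∀ a, ¬ lt a a
  lt_trans : ∀ {a b c}, lt a b → lt b c → lt a c
  wellOrdered : ∀ a : Node, IsWellOrder {b : Node // lt b a} fun x y => lt x.1 y.1
  leaf : Node → Set X

/-- Strict proper-extension order on finite sequences of naturals. -/
def seqLT (a b : List ℕ) : Prop := a <+: b ∧ a ≠ b

namespace FoliageTree

variable {X : Type u}

/-- The sons (immediate successors) of a node. -/
def Sons (F : FoliageTree X) (x : F.Node) : Set F.Node :=
  {s | F.lt x s ∧ ¬ ∃ t, F.lt x t ∧ F.lt t s}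

/-- A node is maximal if it has no strict successor. -/
def IsMaxNode (F : FoliageTree X) (x : F.Node) : Prop := ¬ ∃ s, F.lt x s

/-- A chain of nodes. -/
def IsChainN (F : FoliageTree X) (C : Set F.Node) : Prop :=
  ∀ x ∈ C, ∀ y ∈ C, F.lt x y ∨ x = y ∨ F.lt y x

/-- A branch is a maximal chain. -/
def IsBranch (F : FoliageTree X) (B : Set F.Node) : Prop :=
  F.IsChainN B ∧ ∀ C, F.IsChainN C → B ⊆ C → B = C

/-- The height of a node: the order type of its set of strict predecessors. -/
noncomputable def height (F : FoliageTree X) (v : F.Node) : Ordinal :=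
  @Ordinal.type {b : F.Node // F.lt b v} (fun x y => F.lt x.1 y.1) (F.wellOrdered v)

/-- `shoot F v`: unions of leaves over cofinite sets of sons of `v`. -/
def shoot (F : FoliageTree X) (v : F.Node) : Set (Set X) :=
  {S | ∃ C : Set F.Node, C ⊆ F.Sons v ∧ (F.Sons v \ C).Finite ∧ S = ⋃ s ∈ C, F.leaf s}

/-- `scope F p`: the nodes whose leaf contains `p`. -/
def scope (F : FoliageTree X) (p : X) : Set F.Node := {x | p ∈ F.leaf x}

/-- The union of all leaves. -/
def flesh (F : FoliageTree X) : Set X := ⋃ x, F.leaf x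

/-- `F` is a foliage `ω,ω`-tree: its skeleton is order-isomorphic to
`(ω^{<ω}, ⊂)`. -/
def IsOmegaOmegaTree (F : FoliageTree X) : Prop := Nonempty (F.lt ≃r seqLT)

/-- `F` is locally strict: the leaf of every non-maximal node is the disjoint
union of the leaves of its sons. -/
def LocallyStrict (F : FoliageTree X) : Prop :=
  ∀ x, ¬ F.IsMaxNode x →
    F.leaf x = (⋃ s ∈ F.Sons x, F.leaf s) ∧
      ∀ s ∈ F.Sons x, ∀ t ∈ F.Sons x, s ≠ t → Disjoint (F.leaf s) (F.leaf t)

/-- `F` has strict branches: it has nodes, and along every branch the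
intersection of the leaves is a singleton. -/
def StrictBranches (F : FoliageTree X) : Prop :=
  Nonempty F.Node ∧ ∀ B, F.IsBranch B → ∃ p, (⋂ x ∈ B, F.leaf x) = {p}

/-- `r` is the root: the least node. -/
def IsRoot (F : FoliageTree X) (r : F.Node) : Prop := ∀ x, r = x ∨ F.lt r x

/-- All leaves are open. -/
def OpenIn [TopologicalSpace X] (F : FoliageTree X) : Prop := ∀ x, IsOpen (F.leaf x)

/-- `F` is a Baire foliage tree on `X`. -/
def IsBaireFoliageTree [TopologicalSpace X] (F : FoliageTree X) : Prop :=
  F.OpenIn ∧ F.LocallyStrict ∧ F.IsOmegaOmegaTree ∧ F.StrictBranches ∧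
    ∃ r, F.IsRoot r ∧ F.leaf r = Set.univ

/-- `F` grows into `X`. -/
def GrowsInto [TopologicalSpace X] (F : FoliageTree X) : Prop :=
  ∀ p : X, ∀ U ∈ nhds p, ∃ z ∈ F.scope p, PiRefines (F.shoot z) {U}

/-- `F` is a π-tree on `X`. -/
def IsPiTree [TopologicalSpace X] (F : FoliageTree X) : Prop :=
  F.IsBaireFoliageTree ∧ F.GrowsInto

/-- `rise F p U`: the set of (finite) heights of nodes `v` whose leaf contains
`p` and whose shoot π-refines `{U}`. -/
noncomputable def rise (F : FoliageTree X) (p : X) (U : Set X) : Set ℕ :=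
  {n | ∃ v ∈ F.scope p, PiRefines (F.shoot v) {U} ∧ F.height v = (n : Ordinal)}

/-- `Rise F`: all sets `rise F p U` for `p ∈ X` and `U` a neighbourhood of `p`. -/
def Rise [TopologicalSpace X] (F : FoliageTree X) : Set (Set ℕ) :=
  {R | ∃ p U, U ∈ nhds p ∧ R = F.rise p U}

end FoliageTree

/-!
A π-tree on `X` amounts to a continuous bijection `Φ : X ≃ (ℕ → ℕ)` such that every neighbourhood
of a point `p` contains, for some `n`, almost all sons of the node of height `n` over `p`; the set
of these `n` is the rise of the neighbourhood. Almost all sons are seen by a large digit at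
position `n`, so this says that the neighbourhood belongs to a filter `levelFilter Φ p n`.

A countable family with the finite intersection property which refines all rises has a
pseudo-intersection `d 0 < d 1 < ⋯`, hence every neighbourhood of `p` belongs to
`levelFilter Φ p (d i)` for all large `i`. In a countable product, distribute the coordinates
`(a, j)` of the codes over finite blocks so that, for each `a` and all large `i`, the coordinate
`(a, d a i)` lies in block `i` and every `(a, j)` with `j < d a i` lies in an earlier block. Code
the contents of block `i` by two naturals, the first of which is at most every entry of the block.
If that first digit is large, then so are all the entries, so one shoot of the product tree
controls the finitely many factors that a basic neighbourhood restricts.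
-/

section Sequences

open PiNat

variable {α : Type*}

/-- The initial segment of length `n` of an infinite sequence, as a list read from left to right.
(`PiNat.res` reads from right to left, which does not fit the prefix order `seqLT`.) -/
def initSeg (x : ℕ → α) (n : ℕ) : List α := (List.range n).map x

@[simp]
theorem length_initSeg (x : ℕ → α) (n : ℕ) : (initSeg x n).length = n := by
  simp [initSeg]

theorem initSeg_succ (x : ℕ → α) (n : ℕ) : initSeg x (n + 1) = initSeg x n ++ [x n] := by
  simp [initSeg, List.range_succ]

theorem initSeg_eq_initSeg_iff {x y : ℕ → α} {n : ℕ} :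
    initSeg y n = initSeg x n ↔ y ∈ cylinder x n := by
  simp [initSeg]

theorem initSeg_prefix_initSeg (x : ℕ → α) {m n : ℕ} (h : m ≤ n) :
    initSeg x m <+: initSeg x n := by
  simp [List.prefix_iff_eq_take, initSeg, ← List.map_take, List.take_range, h]

theorem prefix_initSeg_length_iff {x : ℕ → α} {s : List α} :
    s <+: initSeg x s.length ↔ initSeg x s.length = s :=
  ⟨fun h ↦ (h.eq_of_length (length_initSeg x _).symm).symm, fun h ↦ by rw [h]⟩

theorem exists_initSeg_length_eq [Nonempty α] (s : List α) : ∃ x, initSeg x s.length = s := by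
  inhabit α
  refine ⟨fun i ↦ s.getD i default, List.ext_getElem (by simp) fun i _ hi ↦ ?_⟩
  simp [initSeg, hi]

theorem exists_seq_eq_apply_initSeg (next : List α → α) :
    ∃ x : ℕ → α, ∀ n, x n = next (initSeg x n) := by
  let seg : ℕ → List α := fun n ↦ (fun s ↦ s ++ [next s])^[n] []
  have hseg : ∀ n, initSeg (fun i ↦ next (seg i)) n = seg n := by
    intro n
    induction n with
    | zero => rfl
    | succ n ih => simp only [initSeg_succ, ih, seg, Function.iterate_succ_apply']
  exact ⟨fun i ↦ next (seg i), fun n ↦ by rw [hseg n]⟩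

/-- The basic open set of all infinite sequences that extend the finite sequence `s`. -/
def listCylinder (s : List α) : Set (ℕ → α) := {x | initSeg x s.length = s}

theorem listCylinder_nil : listCylinder ([] : List α) = univ :=
  eq_univ_of_forall fun _ ↦ rfl

theorem listCylinder_initSeg (x : ℕ → α) (n : ℕ) : listCylinder (initSeg x n) = cylinder x n := by
  ext y
  rw [← initSeg_eq_initSeg_iff, listCylinder, mem_ofPred_eq, length_initSeg]

theorem mem_listCylinder_concat {s : List α} {k : α} {x : ℕ → α} :
    x ∈ listCylinder (s ++ [k]) ↔ x ∈ listCylinder s ∧ x s.length = k := by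
  simp [listCylinder, initSeg_succ]

theorem listCylinder_nonempty [Nonempty α] (s : List α) : (listCylinder s).Nonempty :=
  exists_initSeg_length_eq s

theorem listCylinder_eq_cylinder {s : List α} {x : ℕ → α} (hx : x ∈ listCylinder s) :
    listCylinder s = cylinder x s.length := by
  rw [← listCylinder_initSeg, show initSeg x s.length = s from hx]

theorem isOpen_listCylinder [TopologicalSpace α] [DiscreteTopology α] (s : List α) :
    IsOpen (listCylinder s) :=
  isOpen_iff_forall_mem_open.2 fun x hx ↦
    ⟨_, subset_rfl, listCylinder_eq_cylinder hx ▸ isOpen_cylinder _ x _, hx⟩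

theorem continuous_of_isOpen_preimage_listCylinder [TopologicalSpace α] [DiscreteTopology α]
    {X : Type*} [TopologicalSpace X] {f : X → ℕ → α}
    (hf : ∀ s, IsOpen (f ⁻¹' listCylinder s)) : Continuous f := by
  refine (isTopologicalBasis_cylinders fun _ ↦ α).continuous_iff.2 ?_
  rintro _ ⟨x, n, rfl⟩
  rw [← listCylinder_initSeg]
  exact hf _

theorem forall_mem_cylinder_iff {x y : ℕ → α} : (∀ n, y ∈ cylinder x n) ↔ y = x :=
  ⟨fun h ↦ funext fun i ↦ h (i + 1) i i.lt_succ_self, fun h n ↦ h ▸ self_mem_cylinder y n⟩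

theorem exists_forall_mem_iff_mem_listCylinder [Nonempty α] {X : Type*} {L : List α → Set X}
    (hnil : L [] = univ) (hunion : ∀ s, L s = ⋃ k, L (s ++ [k]))
    (hdisj : ∀ s, Pairwise (Function.onFun Disjoint fun k ↦ L (s ++ [k]))) (p : X) :
    ∃ x : ℕ → α, ∀ s, p ∈ L s ↔ x ∈ listCylinder s := by
  have hsucc (s : List α) : ∃ k, ∀ l, p ∈ L (s ++ [l]) ↔ p ∈ L s ∧ k = l := by
    by_cases hp : p ∈ L s
    · obtain ⟨k, hk⟩ := mem_iUnion.1 (hunion s ▸ hp)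
      refine ⟨k, fun l ↦ ⟨fun hl ↦ ⟨hp, ?_⟩, fun h ↦ h.2 ▸ hk⟩⟩
      by_contra hkl
      exact disjoint_left.1 (hdisj s hkl) hk hl
    · refine ⟨Classical.arbitrary α, fun l ↦ ⟨fun hl ↦ absurd ?_ hp, fun h ↦ absurd h.1 hp⟩⟩
      rw [hunion s]
      exact mem_iUnion_of_mem l hl
  choose next hnext using hsucc
  obtain ⟨x, hx⟩ := exists_seq_eq_apply_initSeg next
  refine ⟨x, fun s ↦ ?_⟩
  induction s using List.reverseRecOn with
  | nil => simp [hnil, listCylinder_nil]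
  | append_singleton s k ih =>
    rw [hnext, mem_listCylinder_concat, ih]
    refine and_congr_right fun hs ↦ ?_
    rw [hx, show initSeg x s.length = s from hs]

theorem exists_equiv_forall_eq_preimage_listCylinder [Nonempty α] {X : Type*} {L : List α → Set X}
    (hnil : L [] = univ) (hunion : ∀ s, L s = ⋃ k, L (s ++ [k]))
    (hdisj : ∀ s, Pairwise (Function.onFun Disjoint fun k ↦ L (s ++ [k])))
    (hbranch : ∀ x : ℕ → α, ∃ p, ⋂ n, L (initSeg x n) = {p}) :
    ∃ Φ : X ≃ (ℕ → α), ∀ s, L s = Φ ⁻¹' listCylinder s := by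
  choose code hcode using exists_forall_mem_iff_mem_listCylinder hnil hunion hdisj
  have hcode_eq (p : X) (x : ℕ → α) : p ∈ ⋂ n, L (initSeg x n) ↔ code p = x := by
    simp only [mem_iInter, hcode, listCylinder_initSeg, forall_mem_cylinder_iff]
  have hbij : Function.Bijective code := by
    refine Function.bijective_iff_existsUnique code |>.2 fun x ↦ ?_
    obtain ⟨p, hp⟩ := hbranch x
    simp only [← hcode_eq, hp]
    exact ⟨p, rfl, fun _ h ↦ h⟩
  exact ⟨Equiv.ofBijective code hbij, fun s ↦ ext fun p ↦ hcode p s⟩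

end Sequences

section PrefixOrder

theorem seqLT.length_lt {s t : List ℕ} (h : seqLT s t) : s.length < t.length :=
  h.1.length_le.lt_of_ne fun hlen ↦ h.2 (h.1.eq_of_length hlen)

theorem seqLT_concat (s : List ℕ) (k : ℕ) : seqLT s (s ++ [k]) :=
  ⟨List.prefix_append _ _, by simp⟩

theorem seqLT.trans {r s t : List ℕ} (hrs : seqLT r s) (hst : seqLT s t) : seqLT r t :=
  ⟨hrs.1.trans hst.1, fun h ↦ (hrs.length_lt.trans hst.length_lt).ne (congrArg _ h)⟩

theorem seqLT_trichotomy_of_prefix {r s t : List ℕ} (hr : r <+: t) (hs : s <+: t) :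
    seqLT r s ∨ r = s ∨ seqLT s r := by
  by_cases h : r = s
  · exact Or.inr (Or.inl h)
  · exact (List.prefix_or_prefix_of_prefix hr hs).imp (fun hrs ↦ ⟨hrs, h⟩)
      fun hsr ↦ Or.inr ⟨hsr, Ne.symm h⟩

theorem seqLT_and_not_between_iff {s t : List ℕ} :
    (seqLT s t ∧ ¬ ∃ r, seqLT s r ∧ seqLT r t) ↔ ∃ k, t = s ++ [k] := by
  constructor
  · rintro ⟨⟨⟨_ | ⟨k, u⟩, rfl⟩, hne⟩, hbetween⟩
    · simp at hne
    · refine ⟨k, by_contra fun h ↦ hbetween ⟨s ++ [k], seqLT_concat s k, ⟨u, by simp⟩, Ne.symm h⟩⟩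
  · rintro ⟨k, rfl⟩
    refine ⟨seqLT_concat s k, fun ⟨r, hsr, hrt⟩ ↦ ?_⟩
    have := hsr.length_lt
    have := hrt.length_lt
    rw [List.length_append, List.length_singleton] at this
    omega

theorem isWellOrder_subtype_seqLT (t : List ℕ) :
    IsWellOrder {s // seqLT s t} fun r s ↦ seqLT r.1 s.1 where
  trichotomous r s hrs hsr := by
    rcases seqLT_trichotomy_of_prefix r.2.1 s.2.1 with h | h | h
    · exact absurd h hrs
    · exact Subtype.ext h
    · exact absurd h hsr
  wf := Subrelation.wf (fun h ↦ seqLT.length_lt h)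
    (measure fun s : {s // seqLT s t} ↦ s.1.length).wf

theorem nonempty_fin_length_equiv_seqLT (t : List ℕ) :
    Nonempty (Fin t.length ≃ {s // seqLT s t}) := by
  have htake (i : Fin t.length) : (t.take i).length = i := by simp
  refine ⟨Equiv.ofBijective (fun i ↦ ⟨t.take i, List.take_prefix _ _, fun h ↦ ?_⟩) ⟨?_, ?_⟩⟩
  · exact i.2.ne ((htake i).symm.trans (congrArg _ h))
  · intro i j h
    exact Fin.ext <| by rw [← htake i, ← htake j, show t.take i = t.take j from Subtype.ext_iff.1 h]
  · rintro ⟨s, hs⟩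
    exact ⟨⟨s.length, hs.length_lt⟩, Subtype.ext (List.prefix_iff_eq_take.1 hs.1).symm⟩

theorem prefix_of_isChain_seqLT {B : Set (List ℕ)} (hB : IsChain seqLT B) {s t : List ℕ}
    (hs : s ∈ B) (ht : t ∈ B) (hlen : s.length ≤ t.length) : s <+: t := by
  by_cases hst : s = t
  · rw [hst]
  · rcases hB hs ht hst with h | h
    · exact h.1
    · exact absurd h.length_lt hlen.not_gt

theorem isChain_range_initSeg (x : ℕ → ℕ) : IsChain seqLT (range (initSeg x)) := by
  rintro _ ⟨m, rfl⟩ _ ⟨n, rfl⟩ hne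
  have hm := initSeg_prefix_initSeg x (le_max_left m n)
  have hn := initSeg_prefix_initSeg x (le_max_right m n)
  exact (seqLT_trichotomy_of_prefix hm hn).imp_right fun h ↦ h.resolve_left hne

theorem isMaxChain_range_initSeg (x : ℕ → ℕ) : IsMaxChain seqLT (range (initSeg x)) := by
  refine ⟨isChain_range_initSeg x, fun C hC hsub ↦ hsub.antisymm fun s hs ↦ ⟨s.length, ?_⟩⟩
  exact prefix_initSeg_length_iff.1 <|
    prefix_of_isChain_seqLT hC hs (hsub (mem_range_self _)) (length_initSeg x _).ge

theorem exists_lt_length_of_isMaxChain_seqLT {B : Set (List ℕ)} (hB : IsMaxChain seqLT B) (n : ℕ) :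
    ∃ s ∈ B, n < s.length := by
  by_contra! hbdd
  obtain ⟨s, hsB, hs⟩ : ∃ s ∈ B, ∀ t ∈ B, t.length ≤ s.length := by
    have hfin : (List.length '' B).Finite :=
      (finite_Iic n).subset (image_subset_iff.2 hbdd)
    have hne : B.Nonempty := IsMaxChain.nonempty_iff hB |>.1 inferInstance
    obtain ⟨s, hs⟩ := hfin.exists_maximalFor' List.length B hne
    exact ⟨s, hs.1, fun t ht ↦ (le_total t.length s.length).elim id (hs.2 ht)⟩
  have hlt (t : List ℕ) (ht : t ∈ B) : seqLT t (s ++ [0]) := by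
    by_cases hts : t = s
    · exact hts ▸ seqLT_concat s 0
    · exact .trans ⟨prefix_of_isChain_seqLT hB.1 ht hsB (hs t ht), hts⟩ (seqLT_concat s 0)
  have hmem : s ++ [0] ∈ B := by
    rw [hB.2 (hB.1.insert fun t ht _ ↦ Or.inr (hlt t ht)) (subset_insert _ _)]
    exact mem_insert _ _
  exact (hlt _ hmem).2 rfl

theorem isMaxChain_seqLT_iff {B : Set (List ℕ)} :
    IsMaxChain seqLT B ↔ ∃ x : ℕ → ℕ, B = range (initSeg x) := by
  refine ⟨fun hB ↦ ?_, fun ⟨x, hx⟩ ↦ hx ▸ isMaxChain_range_initSeg x⟩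
  choose a haB ha using exists_lt_length_of_isMaxChain_seqLT hB
  refine ⟨fun n ↦ (a n)[n]'(ha n), hB.2 (isChain_range_initSeg _) fun s hs ↦ ⟨s.length, ?_⟩⟩
  refine List.ext_getElem (length_initSeg _ _) fun i _ hi ↦ ?_
  simp only [initSeg, List.getElem_map, List.getElem_range]
  rcases le_total s.length (a i).length with h | h
  · exact ((prefix_of_isChain_seqLT hB.1 hs (haB i) h).getElem hi).symm
  · exact (prefix_of_isChain_seqLT hB.1 (haB i) hs h).getElem (ha i)

end PrefixOrder

section LevelFilter

open Filter PiNat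

variable {X : Type*}

/-- The filter of the points whose code agrees with that of `p` below position `n` and whose digit
at position `n` tends to infinity. When `f` codes a foliage tree, this is the filter generated by
the shoot of the node of height `n` in the scope of `p`. -/
def levelFilter (f : X → ℕ → ℕ) (p : X) (n : ℕ) : Filter X :=
  comap (fun q ↦ f q n) atTop ⊓ 𝓟 (f ⁻¹' cylinder (f p) n)

theorem mem_levelFilter_iff {f : X → ℕ → ℕ} {p : X} {n : ℕ} {U : Set X} :
    U ∈ levelFilter f p n ↔
      {k | ¬ ∀ q, f q ∈ cylinder (f p) n → f q n = k → q ∈ U}.Finite := by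
  change (∀ᶠ q in levelFilter f p n, q ∈ U) ↔ _
  rw [levelFilter, eventually_inf_principal, eventually_comap, ← Nat.cofinite_eq_atTop]
  exact eventually_congr (.of_forall fun k ↦ forall_congr' fun _ ↦ forall_comm)

theorem tendsto_levelFilter {Y : Type*} {f : X → ℕ → ℕ} {g : Y → ℕ → ℕ} {u : X → Y} {p : X}
    {m n : ℕ} (hcyl : ∀ q, f q ∈ cylinder (f p) m → g (u q) ∈ cylinder (g (u p)) n)
    (hle : ∀ q, f q m ≤ g (u q) n) : Tendsto u (levelFilter f p m) (levelFilter g (u p) n) := by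
  refine tendsto_inf.2 ⟨tendsto_comap_iff.2 ?_, tendsto_principal.2 ?_⟩
  · exact tendsto_atTop_mono hle (tendsto_comap.mono_left inf_le_left)
  · exact mem_inf_of_right (mem_principal.2 hcyl)

theorem le_of_preimage_cylinder_mem_levelFilter {f : X → ℕ → ℕ} (hf : Function.Surjective f)
    {p : X} {m n : ℕ} (h : f ⁻¹' cylinder (f p) m ∈ levelFilter f p n) : m ≤ n := by
  by_contra! hnm
  have hfin : {k | k ≠ f p n}.Finite := by
    refine (mem_levelFilter_iff.1 h).subset fun k hk hall ↦ ?_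
    obtain ⟨q, hq⟩ := hf (Function.update (f p) n k)
    have hqk : f q n = k := by rw [hq, Function.update_self]
    have hqp : f q ∈ cylinder (f p) m := hall q (hq ▸ update_mem_cylinder _ _ _) hqk
    exact hk (hqk.symm.trans (hqp n hnm))
  exact (finite_singleton (f p n)).infinite_compl hfin

end LevelFilter

namespace FoliageTree

open Topology

variable {X : Type u} {F : FoliageTree X}

theorem isChainN_iff_isChain {C : Set F.Node} : F.IsChainN C ↔ IsChain F.lt C := by
  refine ⟨fun h x hx y hy hne ↦ ?_, fun h x hx y hy ↦ ?_⟩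
  · exact (h x hx y hy).imp_right fun h ↦ h.resolve_left hne
  · by_cases hxy : x = y
    · exact Or.inr (Or.inl hxy)
    · exact (h hx hy hxy).imp_right Or.inr

theorem isBranch_iff_isMaxChain {B : Set F.Node} : F.IsBranch B ↔ IsMaxChain F.lt B := by
  simp only [IsBranch, IsMaxChain, isChainN_iff_isChain]

theorem finite_sons_not_subset_of_piRefines_shoot {v : F.Node} {U : Set X} (hU : U.Nonempty)
    (h : PiRefines (F.shoot v) {U}) : {s ∈ F.Sons v | ¬ F.leaf s ⊆ U}.Finite := by
  obtain ⟨_, ⟨C, -, hfin, rfl⟩, -, hsub⟩ := h U rfl hU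
  exact hfin.subset fun s hs ↦ ⟨hs.1, fun hC ↦ hs.2 ((subset_biUnion_of_mem hC).trans hsub)⟩

theorem piRefines_shoot_of_finite_sons_not_subset {v : F.Node} {U : Set X}
    (hsons : (F.Sons v).Infinite) (hleaf : ∀ s ∈ F.Sons v, (F.leaf s).Nonempty)
    (h : {s ∈ F.Sons v | ¬ F.leaf s ⊆ U}.Finite) : PiRefines (F.shoot v) {U} := by
  intro D hD _
  obtain rfl : D = U := hD
  have hcofin : (F.Sons v \ {s ∈ F.Sons v | F.leaf s ⊆ D}).Finite :=
    h.subset fun s hs ↦ ⟨hs.1, fun hsU ↦ hs.2 ⟨hs.1, hsU⟩⟩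
  obtain ⟨s, hs, hsU⟩ : ∃ s ∈ F.Sons v, F.leaf s ⊆ D := by
    obtain ⟨s, hs⟩ := (hsons.sdiff h).nonempty
    exact ⟨s, hs.1, not_not.1 fun hsU ↦ hs.2 ⟨hs.1, hsU⟩⟩
  refine ⟨_, ⟨_, fun s hs ↦ hs.1, hcofin, rfl⟩, ?_, iUnion₂_subset fun s hs ↦ hs.2⟩
  exact (hleaf s hs).mono (subset_biUnion_of_mem (u := F.leaf) ⟨hs, hsU⟩)

section OmegaOmegaTree

variable (φ : F.lt ≃r seqLT)

include φ

theorem sons_eq_range (v : F.Node) : F.Sons v = range fun k ↦ φ.symm (φ v ++ [k]) := by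
  ext w
  have h := seqLT_and_not_between_iff (s := φ v) (t := φ w)
  simp only [φ.surjective.exists, φ.map_rel_iff] at h
  exact h.trans (exists_congr fun k ↦ by rw [φ.symm_apply_eq, eq_comm])

theorem injective_symm_concat (v : F.Node) : Function.Injective fun k ↦ φ.symm (φ v ++ [k]) :=
  φ.symm.injective.comp fun k l hkl ↦ by simpa using hkl

theorem not_isMaxNode (v : F.Node) : ¬ F.IsMaxNode v := fun h ↦
  h ⟨φ.symm (φ v ++ [0]), (sons_eq_range φ v ▸ mem_range_self 0 : _ ∈ F.Sons v).1⟩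

theorem isBranch_iff_exists_seq {B : Set F.Node} :
    F.IsBranch B ↔ ∃ x : ℕ → ℕ, B = range fun n ↦ φ.symm (initSeg x n) := by
  rw [isBranch_iff_isMaxChain]
  constructor
  · intro hB
    obtain ⟨x, hx⟩ := isMaxChain_seqLT_iff.1 (hB.image φ)
    refine ⟨x, ?_⟩
    rw [range_comp' φ.symm, ← hx, image_image]
    simp
  · rintro ⟨x, rfl⟩
    rw [range_comp' φ.symm]
    exact (isMaxChain_range_initSeg x).image φ.symm

theorem isRoot_iff {r : F.Node} : F.IsRoot r ↔ φ r = [] := by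
  constructor
  · intro hr
    rcases hr (φ.symm []) with h | h
    · rw [h, φ.apply_symm_apply]
    · exact absurd (φ.map_rel_iff.2 h).length_lt (by simp)
  · intro hr v
    by_cases hv : r = v
    · exact Or.inl hv
    · exact Or.inr (φ.map_rel_iff.1 ⟨hr ▸ List.nil_prefix, φ.injective.ne hv⟩)

theorem height_eq_length (v : F.Node) : F.height v = ((φ v).length : Ordinal) := by
  obtain ⟨e⟩ := nonempty_fin_length_equiv_seqLT (φ v)
  have ψ : {w // F.lt w v} ≃ {s // seqLT s (φ v)} :=
    φ.toEquiv.subtypeEquiv fun _ ↦ φ.map_rel_iff.symm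
  rw [← Ordinal.card_eq_nat, height, Ordinal.card_type, Cardinal.mk_congr (ψ.trans e.symm)]
  simp

end OmegaOmegaTree

/-- The bijection `Φ` codes the foliage tree `F` along the isomorphism `φ` of its skeleton with the
tree of finite sequences: the leaf of a node consists of the points whose code extends the finite
sequence attached to that node. -/
def IsCodedBy (F : FoliageTree X) (φ : F.lt ≃r seqLT) (Φ : X ≃ (ℕ → ℕ)) : Prop :=
  ∀ v, F.leaf v = Φ ⁻¹' listCylinder (φ v)

/-- The foliage tree on the finite sequences of naturals coded by a given bijection. -/
def ofCoding (Φ : X ≃ (ℕ → ℕ)) : FoliageTree X where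
  Node := List ℕ
  lt := seqLT
  lt_irrefl _ h := h.2 rfl
  lt_trans := seqLT.trans
  wellOrdered := isWellOrder_subtype_seqLT
  leaf s := Φ ⁻¹' listCylinder s

theorem isCodedBy_ofCoding (Φ : X ≃ (ℕ → ℕ)) : (ofCoding Φ).IsCodedBy (RelIso.refl _) Φ :=
  fun _ ↦ rfl

theorem IsBaireFoliageTree.exists_isCodedBy [TopologicalSpace X] (hF : F.IsBaireFoliageTree) :
    ∃ (φ : F.lt ≃r seqLT) (Φ : X ≃ (ℕ → ℕ)), F.IsCodedBy φ Φ ∧ Continuous Φ := by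
  obtain ⟨hopen, hstrict, ⟨φ⟩, ⟨-, hbranch⟩, r, hr, hleaf⟩ := hF
  have hsplit (s : List ℕ) := hstrict _ (not_isMaxNode φ (φ.symm s))
  simp only [sons_eq_range φ, φ.apply_symm_apply, biUnion_range, forall_mem_range] at hsplit
  obtain ⟨Φ, hΦ⟩ := exists_equiv_forall_eq_preimage_listCylinder (L := fun s ↦ F.leaf (φ.symm s))
    (by rwa [← (isRoot_iff φ).1 hr, φ.symm_apply_apply]) (fun s ↦ (hsplit s).1)
    (fun s k l hkl ↦ (hsplit s).2 k l (φ.symm.injective.ne (by simpa using hkl)))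
    (fun x ↦ by simpa using hbranch _ ((isBranch_iff_exists_seq φ).2 ⟨x, rfl⟩))
  refine ⟨φ, Φ, fun v ↦ by rw [← hΦ, φ.symm_apply_apply], ?_⟩
  exact continuous_of_isOpen_preimage_listCylinder fun s ↦ hΦ s ▸ hopen _

namespace IsCodedBy

variable {φ : F.lt ≃r seqLT} {Φ : X ≃ (ℕ → ℕ)}

theorem mem_leaf_concat (h : F.IsCodedBy φ Φ) {v : F.Node} {k : ℕ} {q : X} :
    q ∈ F.leaf (φ.symm (φ v ++ [k])) ↔ q ∈ F.leaf v ∧ Φ q (φ v).length = k := by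
  rw [h, h, φ.apply_symm_apply]
  exact mem_listCylinder_concat

theorem locallyStrict (h : F.IsCodedBy φ Φ) : F.LocallyStrict := by
  intro v _
  simp only [sons_eq_range φ, biUnion_range, forall_mem_range]
  refine ⟨ext fun q ↦ by simp [h.mem_leaf_concat], fun k l hkl ↦ disjoint_left.2 fun q hk hl ↦ ?_⟩
  rw [h.mem_leaf_concat] at hk hl
  exact hkl (by rw [← hk.2, hl.2])

theorem strictBranches (h : F.IsCodedBy φ Φ) : F.StrictBranches := by
  refine ⟨⟨φ.symm []⟩, fun B hB ↦ ?_⟩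
  obtain ⟨x, rfl⟩ := (isBranch_iff_exists_seq φ).1 hB
  refine ⟨Φ.symm x, ext fun q ↦ ?_⟩
  simp only [biInter_range, mem_iInter, h _, φ.apply_symm_apply, listCylinder_initSeg, mem_preimage,
    forall_mem_cylinder_iff, mem_singleton_iff, Φ.eq_symm_apply]

theorem isBaireFoliageTree [TopologicalSpace X] (h : F.IsCodedBy φ Φ) (hΦ : Continuous Φ) :
    F.IsBaireFoliageTree := by
  refine ⟨fun v ↦ h v ▸ (isOpen_listCylinder _).preimage hΦ, h.locallyStrict, ⟨φ⟩,
    h.strictBranches, φ.symm [], (isRoot_iff φ).2 (φ.apply_symm_apply _), ?_⟩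
  rw [h, φ.apply_symm_apply, listCylinder_nil, preimage_univ]

theorem finite_sons_not_subset_iff (h : F.IsCodedBy φ Φ) {v : F.Node} {p : X} {U : Set X}
    (hp : p ∈ F.leaf v) :
    {s ∈ F.Sons v | ¬ F.leaf s ⊆ U}.Finite ↔ U ∈ levelFilter Φ p (φ v).length := by
  have hleaf : F.leaf v = Φ ⁻¹' PiNat.cylinder (Φ p) (φ v).length := by
    rw [h v] at hp ⊢
    rw [listCylinder_eq_cylinder hp]
  have hsons : {s ∈ F.Sons v | ¬ F.leaf s ⊆ U} =
      (fun k ↦ φ.symm (φ v ++ [k])) '' {k | ¬ F.leaf (φ.symm (φ v ++ [k])) ⊆ U} := by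
    rw [sons_eq_range φ]
    ext s
    constructor
    · rintro ⟨⟨k, rfl⟩, hk⟩
      exact ⟨k, hk, rfl⟩
    · rintro ⟨k, hk, rfl⟩
      exact ⟨⟨k, rfl⟩, hk⟩
  rw [hsons, finite_image_iff (injective_symm_concat φ v).injOn, mem_levelFilter_iff]
  simp only [subset_def, h.mem_leaf_concat, hleaf, mem_preimage, and_imp]

theorem piRefines_shoot_iff (h : F.IsCodedBy φ Φ) {v : F.Node} {p : X} {U : Set X}
    (hU : U.Nonempty) (hp : p ∈ F.leaf v) :
    PiRefines (F.shoot v) {U} ↔ U ∈ levelFilter Φ p (φ v).length := by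
  rw [← h.finite_sons_not_subset_iff hp]
  refine ⟨finite_sons_not_subset_of_piRefines_shoot hU,
    piRefines_shoot_of_finite_sons_not_subset ?_ fun s _ ↦ ?_⟩
  · rw [sons_eq_range φ]
    exact infinite_range_of_injective (injective_symm_concat φ v)
  · rw [h]
    exact (listCylinder_nonempty _).preimage Φ.surjective

theorem mem_rise_iff (h : F.IsCodedBy φ Φ) {p : X} {U : Set X} (hU : U.Nonempty) {n : ℕ} :
    n ∈ F.rise p U ↔ U ∈ levelFilter Φ p n := by
  constructor
  · rintro ⟨v, hp, hv, hn⟩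
    rw [height_eq_length φ, Nat.cast_inj] at hn
    exact hn ▸ (h.piRefines_shoot_iff hU hp).1 hv
  · intro hn
    have hp : p ∈ F.leaf (φ.symm (initSeg (Φ p) n)) := by
      rw [h, φ.apply_symm_apply, listCylinder_initSeg]
      exact PiNat.self_mem_cylinder _ _
    have hlen : (φ (φ.symm (initSeg (Φ p) n))).length = n := by simp
    exact ⟨_, hp, (h.piRefines_shoot_iff hU hp).2 (hlen.symm ▸ hn),
      by rw [height_eq_length φ, hlen]⟩

theorem growsInto_iff [TopologicalSpace X] (h : F.IsCodedBy φ Φ) :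
    F.GrowsInto ↔ ∀ p, ∀ U ∈ 𝓝 p, ∃ n, U ∈ levelFilter Φ p n := by
  refine forall₃_congr fun p U hU ↦ ?_
  have hne : U.Nonempty := ⟨p, mem_of_mem_nhds hU⟩
  constructor
  · rintro ⟨v, hp, hv⟩
    exact ⟨_, (h.piRefines_shoot_iff hne hp).1 hv⟩
  · rintro ⟨n, hn⟩
    obtain ⟨v, hp, hv, -⟩ := (h.mem_rise_iff hne).2 hn
    exact ⟨v, hp, hv⟩

end IsCodedBy

end FoliageTree

section Levels

open Filter Topology

theorem HasFIP.neBot_generate {α : Type*} [Nonempty α] {γ : Set (Set α)} (hγ : HasFIP γ) :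
    (generate γ).NeBot := by
  refine generate_neBot_iff.2 fun δ hδ hfin ↦ ?_
  rcases δ.eq_empty_or_nonempty with rfl | hne
  · rw [sInter_empty]
    exact univ_nonempty
  · exact hγ δ hδ hfin hne

theorem exists_strictMono_forall_eventually_mem {γ : Set (Set ℕ)} (hcount : γ.Countable)
    (hfip : HasFIP γ) (hlarge : ∀ m, ∃ G ∈ γ, G ⊆ Ici m) :
    ∃ d : ℕ → ℕ, StrictMono d ∧ ∀ G ∈ γ, ∀ᶠ i in atTop, d i ∈ G := by
  have : (generate γ).NeBot := hfip.neBot_generate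
  have : (generate γ).IsCountablyGenerated := ⟨γ, hcount, rfl⟩
  have hatTop : generate γ ≤ atTop := by
    refine atTop_basis.ge_iff.2 fun m _ ↦ ?_
    obtain ⟨G, hG, hGm⟩ := hlarge m
    exact mem_of_superset (mem_generate_of_mem hG) hGm
  obtain ⟨u, hu⟩ := exists_seq_tendsto (generate γ)
  obtain ⟨φ, hφ, hmono⟩ := strictMono_subseq_of_tendsto_atTop (hu.mono_right hatTop)
  exact ⟨u ∘ φ, hmono, fun G hG ↦ (hu.comp hφ.tendsto_atTop) (mem_generate_of_mem hG)⟩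

theorem FoliageTree.IsPiTree.exists_equiv_levels {X : Type u} [TopologicalSpace X]
    {F : FoliageTree X} (hF : F.IsPiTree) {γ : Set (Set ℕ)} (hcount : γ.Countable)
    (hfip : HasFIP γ) (hγ : PiRefines γ F.Rise) :
    ∃ (Φ : X ≃ (ℕ → ℕ)) (d : ℕ → ℕ), Continuous Φ ∧ StrictMono d ∧
      ∀ p, ∀ U ∈ 𝓝 p, ∀ᶠ i in atTop, U ∈ levelFilter Φ p (d i) := by
  obtain ⟨φ, Φ, hcode, hcont⟩ := hF.1.exists_isCodedBy
  have hrefine (p : X) (U : Set X) (hU : U ∈ 𝓝 p) :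
      ∃ G ∈ γ, ∀ n ∈ G, U ∈ levelFilter Φ p n := by
    have hmem (n : ℕ) := hcode.mem_rise_iff (p := p) ⟨p, mem_of_mem_nhds hU⟩ (n := n)
    obtain ⟨n, hn⟩ := hcode.growsInto_iff.1 hF.2 p U hU
    obtain ⟨G, hG, -, hsub⟩ := hγ _ ⟨p, U, hU, rfl⟩ ⟨n, (hmem n).2 hn⟩
    exact ⟨G, hG, fun n hn ↦ (hmem n).1 (hsub hn)⟩
  have hlarge (m : ℕ) : ∃ G ∈ γ, G ⊆ Ici m := by
    have hopen := (PiNat.isOpen_cylinder _ (Φ (Φ.symm 0)) m).preimage hcont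
    obtain ⟨G, hG, hlevel⟩ := hrefine (Φ.symm 0) _ (hopen.mem_nhds (PiNat.self_mem_cylinder _ _))
    exact ⟨G, hG, fun n hn ↦
      le_of_preimage_cylinder_mem_levelFilter Φ.surjective (hlevel n hn)⟩
  obtain ⟨d, hd, hmem⟩ := exists_strictMono_forall_eventually_mem hcount hfip hlarge
  refine ⟨Φ, d, hcont, hd, fun p U hU ↦ ?_⟩
  obtain ⟨G, hG, hlevel⟩ := hrefine p U hU
  exact (hmem G hG).mono fun i hi ↦ hlevel _ hi

end Levels

section BlockCoding

open PiNat

theorem exists_equiv_prod_of_infinite_fiber {α β : Type*} [Countable α] {g : α → β}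
    (hg : ∀ b, (g ⁻¹' {b}).Infinite) : ∃ E : α ≃ β × ℕ, ∀ x, (E x).1 = g x := by
  have hfiber (b : β) : Nonempty ({x // g x = b} ≃ ℕ) :=
    have : Infinite {x // g x = b} := (hg b).to_subtype
    nonempty_equiv_of_countable
  exact ⟨(Equiv.sigmaFiberEquiv g).symm.trans <|
    (Equiv.sigmaCongrRight fun b ↦ (hfiber b).some).trans (Equiv.sigmaEquivProd β ℕ), fun _ ↦ rfl⟩

theorem exists_equiv_prod_fst_le (ι : Type*) [Finite ι] [Nonempty ι] :
    ∃ E : (ι → ℕ) ≃ ℕ × ℕ, ∀ x j, (E x).1 ≤ x j := by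
  -- Unpairing the minimum makes its fibres infinite even when `ι` has only one element.
  have hfiber (m : ℕ) : ((fun x : ι → ℕ ↦ (⨅ j, x j).unpair.1) ⁻¹' {m}).Infinite := by
    refine infinite_of_injective_forall_mem (f := fun k _ ↦ Nat.pair m k) (fun k l hkl ↦ ?_)
      fun k ↦ by simp
    exact (Nat.pair_eq_pair.1 (congrFun hkl (Classical.arbitrary ι))).2
  obtain ⟨E, hE⟩ := exists_equiv_prod_of_infinite_fiber hfiber
  exact ⟨E, fun x j ↦ by grw [hE, Nat.unpair_left_le, ciInf_le' x j]⟩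

/-- The bijection between sequences of pairs of naturals and sequences of naturals that lists the
entries of the pairs one after the other. -/
def interleave : (ℕ → ℕ × ℕ) ≃ (ℕ → ℕ) :=
  (Equiv.arrowProdEquivProdArrow ℕ _ _).trans <|
    (Equiv.sumArrowEquivProdArrow ℕ ℕ ℕ).symm.trans <|
      Equiv.arrowCongr Equiv.natSumNatEquivNat (Equiv.refl ℕ)

theorem interleave_two_mul (y : ℕ → ℕ × ℕ) (i : ℕ) : interleave y (2 * i) = (y i).1 := by
  have : Equiv.natSumNatEquivNat.symm (2 * i) = Sum.inl i := by simp
  simp [interleave, Equiv.sumArrowEquivProdArrow, this]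

theorem interleave_two_mul_add_one (y : ℕ → ℕ × ℕ) (i : ℕ) :
    interleave y (2 * i + 1) = (y i).2 := by
  have : Equiv.natSumNatEquivNat.symm (2 * i + 1) = Sum.inr i := by simp
  simp [interleave, Equiv.sumArrowEquivProdArrow, this]

/-- Splitting a function into its restrictions to the fibres of `σ`. -/
def fiberRestrict {α β : Type*} (σ : α → β) (γ : Type*) :
    (α → γ) ≃ ∀ b, {a // σ a = b} → γ where
  toFun x _ a := x a
  invFun y a := y (σ a) ⟨a, rfl⟩
  right_inv y := by
    ext _ ⟨a, rfl⟩
    rfl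

theorem exists_block_coding {C : Type*} {σ : C → ℕ}
    (hfin : ∀ i, (σ ⁻¹' {i}).Finite) (hσ : Function.Surjective σ) :
    ∃ Θ : (C → ℕ) ≃ (ℕ → ℕ), Continuous Θ ∧
      (∀ x y i, Θ y ∈ cylinder (Θ x) (2 * i) → ∀ c, σ c < i → y c = x c) ∧
      ∀ x c, Θ x (2 * σ c) ≤ x c := by
  have (i : ℕ) : Finite {c // σ c = i} := hfin i
  have (i : ℕ) : Nonempty {c // σ c = i} := nonempty_subtype.2 (hσ i)
  choose E hE using fun i ↦ exists_equiv_prod_fst_le {c // σ c = i}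
  let Θ := (fiberRestrict σ ℕ).trans ((Equiv.piCongrRight E).trans interleave)
  have hfst (x : C → ℕ) (i : ℕ) : Θ x (2 * i) = (E i fun c ↦ x c).1 := interleave_two_mul _ i
  have hsnd (x : C → ℕ) (i : ℕ) : Θ x (2 * i + 1) = (E i fun c ↦ x c).2 :=
    interleave_two_mul_add_one _ i
  refine ⟨Θ, continuous_pi fun n ↦ ?_, fun x y i hxy c hc ↦ ?_, fun x c ↦ ?_⟩
  · have hE_cont (i : ℕ) : Continuous fun x : C → ℕ ↦ E i fun c ↦ x c :=
      continuous_of_discreteTopology.comp (continuous_pi fun c ↦ continuous_apply c.1)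
    obtain ⟨i, rfl | rfl⟩ := n.even_or_odd'
    · simpa only [hfst] using (hE_cont i).fst
    · simpa only [hsnd] using (hE_cont i).snd
  · have hblock : (E (σ c) fun c ↦ y c) = E (σ c) fun c ↦ x c := by
      refine Prod.ext ?_ ?_
      · simpa only [hfst] using hxy (2 * σ c) (by omega)
      · simpa only [hsnd] using hxy (2 * σ c + 1) (by omega)
    exact congrFun ((E (σ c)).injective hblock) ⟨c, rfl⟩
  · rw [hfst]
    exact hE (σ c) (fun c ↦ x c) ⟨c, rfl⟩

end BlockCoding

section Product

open Filter Topology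

variable {A : Type*} [Countable A] [Nonempty A]

theorem exists_block_assignment {d : A → ℕ → ℕ} (hd : ∀ a, StrictMono (d a)) :
    ∃ σ : A × ℕ → ℕ, (∀ i, (σ ⁻¹' {i}).Finite) ∧ Function.Surjective σ ∧
      ∀ a, ∀ᶠ i in atTop, σ (a, d a i) = i ∧ ∀ j < d a i, σ (a, j) < i := by
  obtain ⟨e, he, a₀, ha₀⟩ : ∃ e : A → ℕ, Function.Injective e ∧ ∃ a₀, e a₀ = 0 := by
    obtain ⟨e, he⟩ := exists_injective_nat A
    let a₀ := Classical.arbitrary A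
    exact ⟨_, (Equiv.swap (e a₀) 0).injective.comp he, a₀, Equiv.swap_apply_left _ _⟩
  have hex (c : A × ℕ) : ∃ i, e c.1 ≤ i ∧ c.2 < d c.1 (i + 1) :=
    ⟨max (e c.1) c.2, le_max_left _ _,
      (le_max_right _ _).trans_lt (Nat.lt_succ_self _ |>.trans_le (hd c.1).le_apply)⟩
  have hfirst (a : A) (i : ℕ) (hi : e a ≤ i) : Nat.find (hex (a, d a i)) = i := by
    refine (Nat.find_eq_iff _).2 ⟨⟨hi, hd a i.lt_succ_self⟩, fun n hn h ↦ ?_⟩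
    exact ((hd a).monotone (Nat.succ_le_of_lt hn)).not_gt h.2
  refine ⟨fun c ↦ Nat.find (hex c), fun i ↦ ?_, fun i ↦ ⟨_, hfirst a₀ i (ha₀ ▸ i.zero_le)⟩, ?_⟩
  · have hfin : (⋃ a ∈ e ⁻¹' Iic i, Prod.mk a '' Iio (d a (i + 1))).Finite :=
      ((finite_Iic i).preimage he.injOn).biUnion fun a _ ↦ (finite_Iio _).image _
    refine hfin.subset ?_
    rintro c rfl
    obtain ⟨hc, hlt⟩ := Nat.find_spec (hex c)
    exact mem_biUnion hc ⟨c.2, hlt, rfl⟩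
  · refine fun a ↦ (eventually_gt_atTop (e a)).mono fun i hi ↦ ⟨hfirst a i hi.le, fun j hj ↦ ?_⟩
    obtain ⟨i, rfl⟩ := Nat.exists_eq_add_one.2 (Nat.zero_lt_of_lt hi)
    exact Nat.lt_succ_of_le (Nat.find_min' _ ⟨Nat.le_of_lt_succ hi, hj⟩)

theorem exists_equiv_pi_levels {X : A → Type*} [∀ a, TopologicalSpace (X a)]
    {Φ : ∀ a, X a ≃ (ℕ → ℕ)} {d : A → ℕ → ℕ} (hΦ : ∀ a, Continuous (Φ a))
    (hd : ∀ a, StrictMono (d a))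
    (hlevel : ∀ a p, ∀ U ∈ 𝓝 p, ∀ᶠ i in atTop, U ∈ levelFilter (Φ a) p (d a i)) :
    ∃ Ψ : (∀ a, X a) ≃ (ℕ → ℕ), Continuous Ψ ∧ ∀ p, ∀ U ∈ 𝓝 p, ∃ n, U ∈ levelFilter Ψ p n := by
  obtain ⟨σ, hfin, hσ, hblock⟩ := exists_block_assignment hd
  obtain ⟨Θ, hΘ, hcyl, hle⟩ := exists_block_coding hfin hσ
  let Ψ := (Equiv.piCongrRight Φ).trans ((Equiv.curry A ℕ ℕ).symm.trans Θ)
  have htendsto (p : ∀ a, X a) (a : A) : ∀ᶠ i in atTop,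
      Tendsto (Function.eval a) (levelFilter Ψ p (2 * i)) (levelFilter (Φ a) (p a) (d a i)) := by
    refine (hblock a).mono fun i ⟨hi, hlt⟩ ↦ tendsto_levelFilter ?_ fun q ↦ ?_
    · exact fun q hq j hj ↦ hcyl _ _ i hq (a, j) (hlt j hj)
    · have hle_block : Ψ q (2 * σ (a, d a i)) ≤ Φ a (q a) (d a i) := hle _ (a, d a i)
      rwa [hi] at hle_block
  refine ⟨Ψ, hΘ.comp ?_, fun p U hU ↦ ?_⟩
  · exact continuous_pi fun c ↦
      (continuous_apply c.2).comp ((hΦ c.1).comp (continuous_apply c.1))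
  · rw [nhds_pi, Filter.mem_pi] at hU
    obtain ⟨I, hI, t, ht, hsub⟩ := hU
    have hpre (a : A) : ∀ᶠ i in atTop, Function.eval a ⁻¹' t a ∈ levelFilter Ψ p (2 * i) :=
      (htendsto p a).mp ((hlevel a (p a) (t a) (ht a)).mono fun i hi h ↦ h hi)
    obtain ⟨i, hi⟩ := ((eventually_all_finite hI).2 fun a _ ↦ hpre a).exists
    exact ⟨2 * i, mem_of_superset ((biInter_mem hI).2 hi) fun q hq ↦
      hsub fun a ha ↦ mem_iInter₂.1 hq a ha⟩

end Product

/-- Theorem 2(a) of the paper. -/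
theorem product_has_piTree_of_countable_FIP_refinements
    {A : Type} [Countable A] [Nonempty A]
    {X : A → Type u} [∀ a, TopologicalSpace (X a)]
    (F : ∀ a, FoliageTree (X a)) (hF : ∀ a, (F a).IsPiTree)
    (hγ : ∀ a, ∃ γ : Set (Set ℕ), γ.Countable ∧ HasFIP γ ∧ PiRefines γ ((F a).Rise)) :
    ∃ G : FoliageTree (∀ a, X a), G.IsPiTree := by
  choose γ hcount hfip hrefine using hγ
  choose Φ d hΦ hd hlevel using fun a ↦ (hF a).exists_equiv_levels (hcount a) (hfip a) (hrefine a)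
  obtain ⟨Ψ, hΨ, hgrows⟩ := exists_equiv_pi_levels hΦ hd hlevel
  have hcode := FoliageTree.isCodedBy_ofCoding Ψ
  exact ⟨.ofCoding Ψ, hcode.isBaireFoliageTree hΨ, hcode.growsInto_iff.2 hgrows⟩
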